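/- arXiv:2504.01176 — 2 statements merged into one kernel-verified Lean document; each statement's English description precedes it below -/
import Mathlib

section
/- Let G be a group, U, V : G → U(n) two group homomorphisms into the unitary group of Mₙ(ℂ), and let {F_i}_{i=1}^{n²} be an orthonormal basis of Mₙ(ℂ) with respect to the Frobenius inner product ⟨A,B⟩ = tr(A* B). Let c = [c_{ij}] ∈ M_{n²}(ℂ) and define the linear map φ : Mₙ(ℂ) → Mₙ(ℂ) by φ(A) = Σ_{i,j=1}^{n²} c_{ij} F_i A F_j*. Let α(g) ∈ M_{n²}(ℂ) be the matrix with entries α_{ij}(g) = ⟨F_i, V(g)* F_j U(g)⟩. Then φ satisfies φ(U(g) A U(g)*) = V(g) φ(A) V(g)* for all g ∈ G and A ∈ Mₙ(ℂ) if and only if c · α(g) = α(g) · c for all g ∈ G. -/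
/-!
Since `F` is a Frobenius-orthonormal basis, `V(g)* Fⱼ U(g) = ∑ₖ α(g)ₖⱼ Fₖ`, hence
`V(g)* φ(U(g) A U(g)*) V(g) = ∑ₖₗ (α(g) c α(g)*)ₖₗ Fₖ A Fₗ*` (`conj_opSum`). The coefficient
matrix of an operator sum is determined by the map (`opSum_injective`), so covariance under `g`
says `α(g) c α(g)* = c`. As `X ↦ V(g)* X U(g)` is a Frobenius isometry, `α(g)` is unitary
(`alphaMat_unitary`), and the condition becomes `α(g) c = c α(g)`.
-/

open Matrix

namespace UVCovariant

variable {n : ℕ} {ι : Type*} [Fintype ι] [DecidableEq ι]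

/-- The operator sum `∑ᵢⱼ cᵢⱼ Fᵢ A Fⱼ*`, viewed as a function of `A`. -/
def opSum (F : ι → Matrix (Fin n) (Fin n) ℂ) (c : Matrix ι ι ℂ)
    (A : Matrix (Fin n) (Fin n) ℂ) : Matrix (Fin n) (Fin n) ℂ :=
  ∑ i, ∑ j, c i j • (F i * A * (F j)ᴴ)

/-- The matrix with entries `⟨Fᵢ, v* Fⱼ u⟩`; it represents `X ↦ v* X u` in the basis `F`. -/
def alphaMat (F : ι → Matrix (Fin n) (Fin n) ℂ) (u v : Matrix (Fin n) (Fin n) ℂ) :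
    Matrix ι ι ℂ :=
  Matrix.of fun i j => ((F i)ᴴ * (vᴴ * F j * u)).trace

theorem expand (F : ι → Matrix (Fin n) (Fin n) ℂ)
    (hF : ∀ i j, ((F i)ᴴ * F j).trace = if i = j then (1 : ℂ) else 0)
    (hs : Submodule.span ℂ (Set.range F) = ⊤) (X : Matrix (Fin n) (Fin n) ℂ) :
    ∑ k, ((F k)ᴴ * X).trace • F k = X := by
  have hX : X ∈ Submodule.span ℂ (Set.range F) := hs ▸ Submodule.mem_top
  induction hX using Submodule.span_induction with
  | mem x hx =>
    obtain ⟨j, rfl⟩ := hx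
    simp [hF]
  | zero => simp
  | add x y _ _ hx hy =>
    simp only [mul_add, trace_add, add_smul, Finset.sum_add_distrib, hx, hy]
  | smul a x _ hx =>
    simp only [mul_smul_comm, trace_smul, smul_assoc, ← Finset.smul_sum, hx]

/-- Parseval's identity for the Frobenius inner product. -/
theorem parseval (F : ι → Matrix (Fin n) (Fin n) ℂ)
    (hF : ∀ i j, ((F i)ᴴ * F j).trace = if i = j then (1 : ℂ) else 0)
    (hs : Submodule.span ℂ (Set.range F) = ⊤) (X Y : Matrix (Fin n) (Fin n) ℂ) :
    ∑ k, star ((F k)ᴴ * Y).trace * ((F k)ᴴ * X).trace = (Yᴴ * X).trace := by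
  conv_rhs => rw [← expand F hF hs X]
  simp only [Finset.mul_sum, trace_sum, mul_smul_comm, trace_smul, smul_eq_mul,
    ← trace_conjTranspose, conjTranspose_mul, conjTranspose_conjTranspose]
  exact Finset.sum_congr rfl fun k _ => mul_comm _ _

theorem alphaMat_unitary (F : ι → Matrix (Fin n) (Fin n) ℂ)
    (hF : ∀ i j, ((F i)ᴴ * F j).trace = if i = j then (1 : ℂ) else 0)
    (hs : Submodule.span ℂ (Set.range F) = ⊤) (u v : Matrix (Fin n) (Fin n) ℂ)
    (hu : u * uᴴ = 1) (hv : v * vᴴ = 1) :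
    (alphaMat F u v)ᴴ * alphaMat F u v = 1 := by
  ext i j
  have h := parseval F hF hs (vᴴ * F j * u) (vᴴ * F i * u)
  have h2 : (vᴴ * F i * u)ᴴ * (vᴴ * F j * u) = uᴴ * ((F i)ᴴ * F j * u) := by
    simp only [conjTranspose_mul, conjTranspose_conjTranspose, Matrix.mul_assoc]
    rw [← Matrix.mul_assoc v, hv, Matrix.one_mul]
  rw [h2, trace_mul_comm, Matrix.mul_assoc ((F i)ᴴ * F j), hu, Matrix.mul_one, hF] at h
  simpa [Matrix.mul_apply, alphaMat, Matrix.one_apply] using h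

/-- The coefficients of an operator sum are determined by the map. Evaluating at matrix units
gives `Mᵀ d M̄ = Mᵀ e M̄`, where row `i` of `M` lists the entries of `Fᵢ`; orthonormality of `F`
is `M̄ Mᵀ = 1`, so both outer factors cancel. -/
theorem opSum_injective (F : ι → Matrix (Fin n) (Fin n) ℂ)
    (hF : ∀ i j, ((F i)ᴴ * F j).trace = if i = j then (1 : ℂ) else 0)
    (d e : Matrix ι ι ℂ) (h : ∀ A, opSum F d A = opSum F e A) : d = e := by
  let M : Matrix ι (Fin n × Fin n) ℂ := Matrix.of fun i p => F i p.1 p.2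
  let N : Matrix ι (Fin n × Fin n) ℂ := Matrix.of fun i p => star (F i p.1 p.2)
  have hNM : N * Mᵀ = 1 := by
    ext i j
    have := hF i j
    rw [Matrix.one_apply, ← this]
    simp only [Matrix.mul_apply, Matrix.trace, Matrix.diag, Fintype.sum_prod_type, N, M,
      Matrix.of_apply, Matrix.transpose_apply, Matrix.conjTranspose_apply]
    exact Finset.sum_comm
  have key : ∀ (f : Matrix ι ι ℂ) (p q : Fin n × Fin n),
      (Mᵀ * f * N) p q = opSum F f (Matrix.single p.2 q.2 1) p.1 q.1 := by
    intro f p q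
    have hs : ∀ i j, (F i * Matrix.single p.2 q.2 (1 : ℂ) * (F j)ᴴ) p.1 q.1
        = F i p.1 p.2 * star (F j q.1 q.2) := by
      intro i j
      simp [Matrix.mul_apply, Matrix.single_apply, ite_and]
    simp only [opSum, Matrix.sum_apply, Matrix.smul_apply, hs, smul_eq_mul]
    simp only [Matrix.mul_apply, Finset.sum_mul, N, M, Matrix.of_apply, Matrix.transpose_apply]
    rw [Finset.sum_comm]
    exact Finset.sum_congr rfl fun i _ => Finset.sum_congr rfl fun j _ => by ring
  have hde : Mᵀ * d * N = Mᵀ * e * N := by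
    ext p q
    rw [key, key, h]
  have cancel : ∀ f : Matrix ι ι ℂ, N * (Mᵀ * f * N) * Mᵀ = f := by
    intro f
    calc N * (Mᵀ * f * N) * Mᵀ = (N * Mᵀ) * f * (N * Mᵀ) := by simp only [Matrix.mul_assoc]
      _ = f := by rw [hNM, Matrix.one_mul, Matrix.mul_one]
  rw [← cancel d, hde, cancel]

theorem conj_opSum (F : ι → Matrix (Fin n) (Fin n) ℂ)
    (hF : ∀ i j, ((F i)ᴴ * F j).trace = if i = j then (1 : ℂ) else 0)
    (hs : Submodule.span ℂ (Set.range F) = ⊤) (c : Matrix ι ι ℂ)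
    (u v A : Matrix (Fin n) (Fin n) ℂ) :
    vᴴ * opSum F c (u * A * uᴴ) * v
      = opSum F (alphaMat F u v * c * (alphaMat F u v)ᴴ) A := by
  have hx : ∀ j, vᴴ * F j * u = ∑ k, alphaMat F u v k j • F k := fun j =>
    (expand F hF hs (vᴴ * F j * u)).symm
  have h1 : ∀ i j, vᴴ * (F i * (u * A * uᴴ) * (F j)ᴴ) * v
      = ∑ k, ∑ l, (alphaMat F u v k i * star (alphaMat F u v l j)) • (F k * A * (F l)ᴴ) := by
    intro i j
    have : vᴴ * (F i * (u * A * uᴴ) * (F j)ᴴ) * v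
        = (vᴴ * F i * u) * A * (vᴴ * F j * u)ᴴ := by
      simp only [conjTranspose_mul, conjTranspose_conjTranspose, Matrix.mul_assoc]
    rw [this, hx, hx]
    simp only [conjTranspose_sum, conjTranspose_smul, Matrix.sum_mul, Matrix.mul_sum,
      Matrix.smul_mul, Matrix.mul_smul, Finset.smul_sum, smul_smul]
    rw [Finset.sum_comm]
    exact Finset.sum_congr rfl fun k _ => Finset.sum_congr rfl fun l _ => by rw [mul_comm]
  simp only [opSum, Matrix.mul_sum, Matrix.sum_mul, Matrix.mul_smul, Matrix.smul_mul, h1,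
    Finset.smul_sum, smul_smul]
  simp only [Matrix.mul_apply, Finset.sum_mul, Finset.sum_smul, conjTranspose_apply]
  -- Both sides are sums over `(i, j, k, l)`; only the order of summation differs.
  have swap : ∀ f : ι → ι → ι → ι → Matrix (Fin n) (Fin n) ℂ,
      ∑ i, ∑ j, ∑ k, ∑ l, f i j k l = ∑ k, ∑ l, ∑ j, ∑ i, f i j k l := by
    intro f
    calc ∑ i, ∑ j, ∑ k, ∑ l, f i j k l
        = ∑ p : ι × ι, ∑ q : ι × ι, f p.1 p.2 q.1 q.2 := by
          simp only [Fintype.sum_prod_type]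
      _ = ∑ q : ι × ι, ∑ p : ι × ι, f p.1 p.2 q.1 q.2 := Finset.sum_comm
      _ = ∑ k, ∑ l, ∑ j, ∑ i, f i j k l := by
          simp only [Fintype.sum_prod_type]
          exact Finset.sum_congr rfl fun k _ => Finset.sum_congr rfl fun l _ => Finset.sum_comm
  rw [swap]
  refine Finset.sum_congr rfl fun k _ => Finset.sum_congr rfl fun l _ =>
    Finset.sum_congr rfl fun j _ => Finset.sum_congr rfl fun i _ => ?_
  congr 1
  ring

/-- The equivalence for a single pair of unitaries. -/
theorem covariant_iff (F : ι → Matrix (Fin n) (Fin n) ℂ)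
    (hF : ∀ i j, ((F i)ᴴ * F j).trace = if i = j then (1 : ℂ) else 0)
    (hs : Submodule.span ℂ (Set.range F) = ⊤) (c : Matrix ι ι ℂ)
    (u v : Matrix (Fin n) (Fin n) ℂ) (hu : u * uᴴ = 1) (hv : v * vᴴ = 1) :
    (∀ A, opSum F c (u * A * uᴴ) = v * opSum F c A * vᴴ) ↔
      c * alphaMat F u v = alphaMat F u v * c := by
  have hα := alphaMat_unitary F hF hs u v hu hv
  have hα' := mul_eq_one_comm.mp hα
  have hv' := mul_eq_one_comm.mp hv
  have h1 : (∀ A, opSum F c (u * A * uᴴ) = v * opSum F c A * vᴴ) ↔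
      alphaMat F u v * c * (alphaMat F u v)ᴴ = c := by
    constructor
    · intro h
      refine opSum_injective F hF _ _ fun A => ?_
      rw [← conj_opSum F hF hs, h A]
      calc vᴴ * (v * opSum F c A * vᴴ) * v = (vᴴ * v) * opSum F c A * (vᴴ * v) := by
            simp only [Matrix.mul_assoc]
        _ = _ := by rw [hv', Matrix.one_mul, Matrix.mul_one]
    · intro h A
      have h2 := conj_opSum F hF hs c u v A
      rw [h] at h2
      rw [← h2]
      calc opSum F c (u * A * uᴴ) = (v * vᴴ) * opSum F c (u * A * uᴴ) * (v * vᴴ) := by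
            rw [hv, Matrix.one_mul, Matrix.mul_one]
        _ = _ := by simp only [Matrix.mul_assoc]
  rw [h1]
  constructor
  · intro h
    calc c * alphaMat F u v
        = alphaMat F u v * c * (alphaMat F u v)ᴴ * alphaMat F u v := by rw [h]
      _ = alphaMat F u v * c := by rw [Matrix.mul_assoc, hα, Matrix.mul_one]
  · intro h
    rw [← h, Matrix.mul_assoc, hα', Matrix.mul_one]

end UVCovariant

/-- A map `φ(A) = ∑ᵢⱼ cᵢⱼ Fᵢ A Fⱼ*` (operator sum representation in a Frobenius
orthonormal basis `F`) satisfies `φ(U(g) A U(g)*) = V(g) φ(A) V(g)*` for all `g`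
iff the coefficient matrix `c` commutes with every `α(g)`, where
`α(g)ᵢⱼ = ⟨Fᵢ, V(g)* Fⱼ U(g)⟩` in the Frobenius inner product. -/
theorem UV_covariant_iff_commutes_with_alpha
    {n : ℕ} {G : Type*} [Group G]
    (U V : G →* Matrix.unitaryGroup (Fin n) ℂ)
    (F : Fin (n ^ 2) → Matrix (Fin n) (Fin n) ℂ)
    (hFortho : ∀ i j, ((F i)ᴴ * F j).trace = if i = j then (1 : ℂ) else 0)
    (hFspan : Submodule.span ℂ (Set.range F) = ⊤)
    (c : Matrix (Fin (n ^ 2)) (Fin (n ^ 2)) ℂ) :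
    (∀ (g : G) (A : Matrix (Fin n) (Fin n) ℂ),
        (∑ i, ∑ j, c i j •
            (F i * ((U g : Matrix (Fin n) (Fin n) ℂ) * A * (U g : Matrix (Fin n) (Fin n) ℂ)ᴴ) *
              (F j)ᴴ)) =
          (V g : Matrix (Fin n) (Fin n) ℂ) * (∑ i, ∑ j, c i j • (F i * A * (F j)ᴴ)) *
            (V g : Matrix (Fin n) (Fin n) ℂ)ᴴ) ↔
      (∀ g : G,
        c * (Matrix.of fun i j =>
            ((F i)ᴴ * ((V g : Matrix (Fin n) (Fin n) ℂ)ᴴ * F j *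
              (U g : Matrix (Fin n) (Fin n) ℂ))).trace) =
          (Matrix.of fun i j =>
            ((F i)ᴴ * ((V g : Matrix (Fin n) (Fin n) ℂ)ᴴ * F j *
              (U g : Matrix (Fin n) (Fin n) ℂ))).trace) * c) := by
  exact forall_congr' fun g => UVCovariant.covariant_iff F hFortho hFspan c _ _
    (Unitary.mul_star_self_of_mem (U g).2) (Unitary.mul_star_self_of_mem (V g).2)
end

section
/- Let n ∈ ℕ and P = {(i,j) ∈ Fin n × Fin n : i < j}. For x : Fin n → ℝ, let Δ(x) be the diagonal P×P matrix with Δ(x)_{(i,j),(i,j)} = x_i − x_j, and let α(x) be the complex block matrix, indexed by P ⊕ P ⊕ Fin n, given by α(x) = [[cos Δ(x), −sin Δ(x), 0], [sin Δ(x), cos Δ(x), 0], [0, 0, Iₙ]]. A complex matrix M indexed by P ⊕ P ⊕ Fin n satisfies M · α(x) = α(x) · M for every x : Fin n → ℝ if and only if M = [[A₁, −A₂, 0], [A₂, A₁, 0], [0, 0, A₃]] for some diagonal matrices A₁, A₂ ∈ M_P(ℂ) and some arbitrary matrix A₃ ∈ Mₙ(ℂ). -/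
/-!
The matrices `α(x)` are simultaneous rotations by the angles `Δ_p(x) = x i - x j` in the planes
indexed by the pairs `p = (i, j)`, and act trivially on the remaining coordinates. Commutation
with `α(x)` can therefore be tested on the small blocks of `M`, and three choices of `x` suffice:

* if `p ≠ q`, some index `m` occurs in `p` but not in `q` (pairs are ordered, so `q` is not `p`
  reversed either); `x = π e_m` rotates the `p`-plane by `±π` and fixes the `q`-plane, so the `2 × 2`
  block of `M` at `(p, q)` equals its own negative (`offDiag_eq_zero`);
* `x = π e_m`, with `m` the first index of `p`, kills the blocks joining the `p`-plane to the
  trivial part (`cross_eq_zero`);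
* `x = (π / 2) e_m`, with the same `m`, rotates the `p`-plane by a right angle, and the
  `2 × 2` matrices commuting with that rotation are those of the form `[[a, -b], [b, a]]` (`diag_rel`).
-/

open Matrix

/-- The index set of pairs `(i,j)` with `i < j` in `Fin n`. -/
abbrev IdxP (n : ℕ) := {p : Fin n × Fin n // p.1 < p.2}

/-- The diagonal entries `x i − x j` of the matrix `Δ(x)`. -/
def DeltaOf {n : ℕ} (x : Fin n → ℝ) (p : IdxP n) : ℝ := x p.val.1 - x p.val.2

/-- The block matrix `α(x) = [[cos Δ(x), −sin Δ(x), 0], [sin Δ(x), cos Δ(x), 0], [0, 0, I]]`. -/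
noncomputable def blockRot {n : ℕ} (x : Fin n → ℝ) :
    Matrix (IdxP n ⊕ IdxP n ⊕ Fin n) (IdxP n ⊕ IdxP n ⊕ Fin n) ℂ :=
  Matrix.of fun i j =>
    match i, j with
    | Sum.inl p, Sum.inl q => if p = q then (Real.cos (DeltaOf x p) : ℂ) else 0
    | Sum.inl p, Sum.inr (Sum.inl q) => if p = q then (-(Real.sin (DeltaOf x p)) : ℂ) else 0
    | Sum.inr (Sum.inl p), Sum.inl q => if p = q then (Real.sin (DeltaOf x p) : ℂ) else 0
    | Sum.inr (Sum.inl p), Sum.inr (Sum.inl q) => if p = q then (Real.cos (DeltaOf x p) : ℂ) else 0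
    | Sum.inr (Sum.inr a), Sum.inr (Sum.inr b) => if a = b then (1 : ℂ) else 0
    | _, _ => 0

/-- The block matrix `[[A₁, −A₂, 0], [A₂, A₁, 0], [0, 0, A₃]]`. -/
def blockM {n : ℕ} (A₁ A₂ : Matrix (IdxP n) (IdxP n) ℂ) (A₃ : Matrix (Fin n) (Fin n) ℂ) :
    Matrix (IdxP n ⊕ IdxP n ⊕ Fin n) (IdxP n ⊕ IdxP n ⊕ Fin n) ℂ :=
  Matrix.of fun i j =>
    match i, j with
    | Sum.inl p, Sum.inl q => A₁ p q
    | Sum.inl p, Sum.inr (Sum.inl q) => -A₂ p q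
    | Sum.inr (Sum.inl p), Sum.inl q => A₂ p q
    | Sum.inr (Sum.inl p), Sum.inr (Sum.inl q) => A₁ p q
    | Sum.inr (Sum.inr a), Sum.inr (Sum.inr b) => A₃ a b
    | _, _ => 0

section Entries

variable {n : ℕ} (M : Matrix (IdxP n ⊕ IdxP n ⊕ Fin n) (IdxP n ⊕ IdxP n ⊕ Fin n) ℂ)
  (x : Fin n → ℝ)

lemma mul_blockRot_apply_inl (i : IdxP n ⊕ IdxP n ⊕ Fin n) (p : IdxP n) :
    (M * blockRot x) i (.inl p) =
      M i (.inl p) * (Real.cos (DeltaOf x p) : ℂ) +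
        M i (.inr (.inl p)) * (Real.sin (DeltaOf x p) : ℂ) := by
  simp [mul_apply, Fintype.sum_sum_type, blockRot]

lemma mul_blockRot_apply_inr_inl (i : IdxP n ⊕ IdxP n ⊕ Fin n) (p : IdxP n) :
    (M * blockRot x) i (.inr (.inl p)) =
      M i (.inr (.inl p)) * (Real.cos (DeltaOf x p) : ℂ) -
        M i (.inl p) * (Real.sin (DeltaOf x p) : ℂ) := by
  simp [mul_apply, Fintype.sum_sum_type, blockRot]
  ring

lemma mul_blockRot_apply_inr_inr (i : IdxP n ⊕ IdxP n ⊕ Fin n) (a : Fin n) :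
    (M * blockRot x) i (.inr (.inr a)) =
      M i (.inr (.inr a)) := by
  simp [mul_apply, Fintype.sum_sum_type, blockRot]

lemma blockRot_mul_apply_inl (i : IdxP n ⊕ IdxP n ⊕ Fin n) (p : IdxP n) :
    (blockRot x * M) (.inl p) i =
      (Real.cos (DeltaOf x p) : ℂ) * M (.inl p) i -
        (Real.sin (DeltaOf x p) : ℂ) * M (.inr (.inl p)) i := by
  simp [mul_apply, Fintype.sum_sum_type, blockRot]
  ring

lemma blockRot_mul_apply_inr_inl (i : IdxP n ⊕ IdxP n ⊕ Fin n) (p : IdxP n) :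
    (blockRot x * M) (.inr (.inl p)) i =
      (Real.sin (DeltaOf x p) : ℂ) * M (.inl p) i +
        (Real.cos (DeltaOf x p) : ℂ) * M (.inr (.inl p)) i := by
  simp [mul_apply, Fintype.sum_sum_type, blockRot]

lemma blockRot_mul_apply_inr_inr (i : IdxP n ⊕ IdxP n ⊕ Fin n) (a : Fin n) :
    (blockRot x * M) (.inr (.inr a)) i =
      M (.inr (.inr a)) i := by
  simp [mul_apply, Fintype.sum_sum_type, blockRot]

end Entries

lemma exists_mem_pair_not_mem {n : ℕ} {p q : IdxP n} (hpq : p ≠ q) :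
    ∃ m, (m = p.val.1 ∨ m = p.val.2) ∧ m ≠ q.val.1 ∧ m ≠ q.val.2 := by
  obtain ⟨⟨i, j⟩, hij⟩ := p
  obtain ⟨⟨k, l⟩, hkl⟩ := q
  simp only [ne_eq, Subtype.mk.injEq, Prod.mk.injEq] at hpq hij hkl ⊢
  by_cases hi : i = k ∨ i = l
  · exact ⟨j, by grind⟩
  · exact ⟨i, by grind⟩

/-- Distinct pairs are separated by some `x`: one plane is rotated by `±π`, the other is fixed. -/
lemma exists_separating {n : ℕ} {p q : IdxP n} (hpq : p ≠ q) :
    ∃ x : Fin n → ℝ, Real.cos (DeltaOf x p) = -1 ∧ Real.sin (DeltaOf x p) = 0 ∧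
      DeltaOf x q = 0 := by
  obtain ⟨m, hm, h1, h2⟩ := exists_mem_pair_not_mem hpq
  refine ⟨Pi.single m Real.pi, ?_⟩
  have hne := p.2.ne
  rcases hm with rfl | rfl
  · simp [DeltaOf, h1.symm, h2.symm, hne.symm]
  · simp [DeltaOf, h1.symm, h2.symm, hne]

lemma exists_deltaOf_eq {n : ℕ} (p : IdxP n) (t : ℝ) : ∃ x : Fin n → ℝ, DeltaOf x p = t :=
  ⟨Pi.single p.val.1 t, by simp [DeltaOf, p.2.ne']⟩

section Commutant

variable {n : ℕ} {M : Matrix (IdxP n ⊕ IdxP n ⊕ Fin n) (IdxP n ⊕ IdxP n ⊕ Fin n) ℂ}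

lemma offDiag_eq_zero (h : ∀ x : Fin n → ℝ, M * blockRot x = blockRot x * M) {p q : IdxP n}
    (hpq : p ≠ q) :
    M (.inl p) (.inl q) = 0 ∧ M (.inl p) (.inr (.inl q)) = 0 ∧
      M (.inr (.inl p)) (.inl q) = 0 ∧ M (.inr (.inl p)) (.inr (.inl q)) = 0 := by
  obtain ⟨x, hc, hs, h0⟩ := exists_separating hpq
  have e (i j) := congrFun₂ (h x) i j
  have e1 := e (.inl p) (.inl q)
  have e2 := e (.inl p) (.inr (.inl q))
  have e3 := e (.inr (.inl p)) (.inl q)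
  have e4 := e (.inr (.inl p)) (.inr (.inl q))
  simp only [mul_blockRot_apply_inl, mul_blockRot_apply_inr_inl, blockRot_mul_apply_inl,
    blockRot_mul_apply_inr_inl, hc, hs, h0, Real.cos_zero, Real.sin_zero] at e1 e2 e3 e4
  push_cast at e1 e2 e3 e4
  refine ⟨?_, ?_, ?_, ?_⟩ <;> grind

lemma cross_eq_zero (h : ∀ x : Fin n → ℝ, M * blockRot x = blockRot x * M) (p : IdxP n)
    (a : Fin n) :
    M (.inl p) (.inr (.inr a)) = 0 ∧ M (.inr (.inl p)) (.inr (.inr a)) = 0 ∧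
      M (.inr (.inr a)) (.inl p) = 0 ∧ M (.inr (.inr a)) (.inr (.inl p)) = 0 := by
  obtain ⟨x, hx⟩ := exists_deltaOf_eq p Real.pi
  have e (i j) := congrFun₂ (h x) i j
  have e1 := e (.inl p) (.inr (.inr a))
  have e2 := e (.inr (.inl p)) (.inr (.inr a))
  have e3 := e (.inr (.inr a)) (.inl p)
  have e4 := e (.inr (.inr a)) (.inr (.inl p))
  simp only [mul_blockRot_apply_inl, mul_blockRot_apply_inr_inl, mul_blockRot_apply_inr_inr,
    blockRot_mul_apply_inl, blockRot_mul_apply_inr_inl, blockRot_mul_apply_inr_inr, hx,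
    Real.cos_pi, Real.sin_pi] at e1 e2 e3 e4
  push_cast at e1 e2 e3 e4
  refine ⟨?_, ?_, ?_, ?_⟩ <;> grind

lemma diag_rel (h : ∀ x : Fin n → ℝ, M * blockRot x = blockRot x * M) (p : IdxP n) :
    M (.inr (.inl p)) (.inr (.inl p)) = M (.inl p) (.inl p) ∧
      M (.inl p) (.inr (.inl p)) = -M (.inr (.inl p)) (.inl p) := by
  obtain ⟨x, hx⟩ := exists_deltaOf_eq p (Real.pi / 2)
  have e1 := congrFun₂ (h x) (.inl p) (.inl p)
  have e2 := congrFun₂ (h x) (.inr (.inl p)) (.inl p)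
  simp only [mul_blockRot_apply_inl, blockRot_mul_apply_inl, blockRot_mul_apply_inr_inl, hx,
    Real.cos_pi_div_two, Real.sin_pi_div_two] at e1 e2
  push_cast at e1 e2
  constructor <;> grind

end Commutant

/-- A matrix `M` commutes with every rotation block matrix `α(x)`, `x : Fin n → ℝ`,
iff `M = [[A₁, −A₂, 0], [A₂, A₁, 0], [0, 0, A₃]]` with `A₁`, `A₂` diagonal and `A₃`
arbitrary. -/
theorem commutant_of_blockRot
    {n : ℕ} (M : Matrix (IdxP n ⊕ IdxP n ⊕ Fin n) (IdxP n ⊕ IdxP n ⊕ Fin n) ℂ) :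
    (∀ x : Fin n → ℝ, M * blockRot x = blockRot x * M) ↔
      ∃ (A₁ A₂ : Matrix (IdxP n) (IdxP n) ℂ) (A₃ : Matrix (Fin n) (Fin n) ℂ),
        A₁.IsDiag ∧ A₂.IsDiag ∧ M = blockM A₁ A₂ A₃ := by
  constructor
  · intro h
    refine ⟨of fun p q => M (.inl p) (.inl q), of fun p q => M (.inr (.inl p)) (.inl q),
      of fun a b => M (.inr (.inr a)) (.inr (.inr b)), ?_, ?_, ?_⟩
    · intro p q hpq
      exact (offDiag_eq_zero h hpq).1
    · intro p q hpq
      exact (offDiag_eq_zero h hpq).2.2.1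
    · ext i j
      rcases i with p | p | a <;> rcases j with q | q | b
      · rfl
      · by_cases hpq : p = q
        · subst hpq
          simpa [blockM] using (diag_rel h p).2
        · simp [blockM, offDiag_eq_zero h hpq]
      · exact (cross_eq_zero h p b).1
      · rfl
      · by_cases hpq : p = q
        · subst hpq
          simpa [blockM] using (diag_rel h p).1
        · simp [blockM, offDiag_eq_zero h hpq]
      · exact (cross_eq_zero h p b).2.1
      · exact (cross_eq_zero h q a).2.2.1
      · exact (cross_eq_zero h q a).2.2.2
      · rfl
  · rintro ⟨A₁, A₂, A₃, h₁, h₂, rfl⟩ x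
    ext i j
    rcases i with p | p | a <;> rcases j with q | q | b <;>
      simp only [mul_blockRot_apply_inl, mul_blockRot_apply_inr_inl, mul_blockRot_apply_inr_inr,
        blockRot_mul_apply_inl, blockRot_mul_apply_inr_inl, blockRot_mul_apply_inr_inr] <;>
      simp only [blockM, of_apply] <;> try ring1
    all_goals
      by_cases hpq : p = q
      · subst hpq
        ring
      · simp [h₁ hpq, h₂ hpq]
end
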